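/- arXiv:1301.5290 — 9 statements merged into one kernel-verified Lean document; each statement's English description precedes it below -/
import Mathlib

section
/- Let N ≥ 1 be an integer, Z ⊆ ℝ^N a nonempty bounded convex set with finite positive Lebesgue measure vol(Z), let ε > 0 and t > 0 be real numbers, and let g : Z → ℝ be a continuous concave function with |g(z)| ≤ εt for all z ∈ Z. Suppose that ∫_Z e^{g(z)} dz ≤ 2 e^{(ε²/3)t} vol(Z), and that α is a real number satisfying 0 < α < 4εt and e^{α/2} (α/(4εt))^N vol(Z) > 1. Then e^{g(z)} ≤ 2 e^{(ε²/3)t + α} vol(Z) for every z ∈ Z. -/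
open MeasureTheory

/-- The interior of a convex set is almost everywhere equal to the set. -/
lemma Convex.interior_ae_eq_self {N : ℕ} {Z : Set (Fin N → ℝ)} (hZ : Convex ℝ Z) :
    interior Z =ᵐ[volume] Z :=
  interior_ae_eq_of_null_frontier (hZ.addHaar_frontier volume)

/-- The exponential of a continuous function that is bounded above is integrable on a convex set
of finite volume. -/
lemma Convex.integrableOn_exp {N : ℕ} {Z : Set (Fin N → ℝ)} (hZ : Convex ℝ Z)
    (hfin : volume Z < ⊤) {g : (Fin N → ℝ) → ℝ} (hg : ContinuousOn g Z) {M : ℝ}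
    (hM : ∀ z ∈ Z, g z ≤ M) : IntegrableOn (fun z => Real.exp (g z)) Z := by
  refine IntegrableOn.congr_set_ae ?_ hZ.interior_ae_eq_self.symm
  have hcont : ContinuousOn (fun z => Real.exp (g z)) (interior Z) :=
    Real.continuous_exp.comp_continuousOn (hg.mono interior_subset)
  refine IntegrableOn.of_bound ((measure_mono interior_subset).trans_lt hfin)
    (hcont.aestronglyMeasurable isOpen_interior.measurableSet) (Real.exp M) ?_
  filter_upwards [ae_restrict_mem isOpen_interior.measurableSet] with z hz
  rw [Real.norm_eq_abs, Real.abs_exp]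
  exact Real.exp_le_exp.mpr (hM z (interior_subset hz))

/-- If `g` is concave with `|g| ≤ M` on `Z`, then shrinking `Z` by a factor `c` towards a point
`z₀` gives a lower bound on the integral of `exp ∘ g`. -/
lemma ConcaveOn.exp_mul_volume_le_setIntegral {N : ℕ} {Z : Set (Fin N → ℝ)}
    (hfin : volume Z < ⊤) {g : (Fin N → ℝ) → ℝ} (hg : ContinuousOn g Z) (hconc : ConcaveOn ℝ Z g)
    {M : ℝ} (hM : ∀ z ∈ Z, |g z| ≤ M) {c : ℝ} (hc0 : 0 < c) (hc1 : c ≤ 1)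
    {z₀ : Fin N → ℝ} (hz₀ : z₀ ∈ Z) :
    Real.exp (g z₀ - 2 * c * M) * (c ^ N * (volume Z).toReal) ≤ ∫ z in Z, Real.exp (g z) := by
  set S := AffineMap.homothety z₀ c '' interior Z with hS
  have hpoint : ∀ y ∈ S, y ∈ Z ∧ g z₀ - 2 * c * M ≤ g y := by
    rintro _ ⟨x, hx, rfl⟩
    have hxZ := interior_subset hx
    have heq : AffineMap.homothety z₀ c x = (1 - c) • z₀ + c • x := by
      rw [AffineMap.homothety_eq_lineMap, AffineMap.lineMap_apply_module]
    rw [heq]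
    refine ⟨hconc.1 hz₀ hxZ (by linarith) hc0.le (by ring), ?_⟩
    have h := hconc.2 hz₀ hxZ (sub_nonneg.mpr hc1) hc0.le (by ring)
    simp only [smul_eq_mul] at h
    have h₁ := mul_le_mul_of_nonneg_left (abs_le.mp (hM x hxZ)).1 hc0.le
    have h₂ := mul_le_mul_of_nonneg_left (abs_le.mp (hM z₀ hz₀)).2 hc0.le
    linarith
  have hSZ : S ⊆ Z := fun y hy => (hpoint y hy).1
  have hSmeas : MeasurableSet S :=
    (AffineMap.homothety_isOpenMap z₀ c hc0.ne' _ isOpen_interior).measurableSet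
  have hSvol : volume.real S = c ^ N * (volume Z).toReal := by
    rw [hS, Measure.real, Measure.addHaar_image_homothety, ENNReal.toReal_mul,
      measure_congr hconc.1.interior_ae_eq_self, Module.finrank_fin_fun,
      abs_of_nonneg (by positivity), ENNReal.toReal_ofReal (by positivity)]
  have hint := hconc.1.integrableOn_exp hfin hg fun z hz => (le_abs_self _).trans (hM z hz)
  calc Real.exp (g z₀ - 2 * c * M) * (c ^ N * (volume Z).toReal)
      ≤ ∫ z in S, Real.exp (g z) := by
        rw [← hSvol]
        exact setIntegral_ge_of_const_le_real hSmeas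
          ((measure_mono hSZ).trans_lt hfin).ne
          (fun y hy => Real.exp_le_exp.mpr (hpoint y hy).2) (hint.mono_set hSZ)
    _ ≤ ∫ z in Z, Real.exp (g z) :=
        setIntegral_mono_set hint (Filter.Eventually.of_forall fun _ => (Real.exp_pos _).le)
          hSZ.eventuallyLE

/-- Lemma 2 of the paper: a pointwise bound on `e^{g(z)}` over a bounded convex set `Z`
from a bound on its integral, for a bounded continuous concave function `g`. -/
theorem stmt_0 {N : ℕ} (hN : 1 ≤ N) (Z : Set (Fin N → ℝ))
    (hZne : Z.Nonempty) (hZbd : Bornology.IsBounded Z) (hZconv : Convex ℝ Z)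
    (hvol_pos : 0 < volume Z) (hvol_fin : volume Z < ⊤)
    (ε t : ℝ) (hε : 0 < ε) (ht : 0 < t)
    (g : (Fin N → ℝ) → ℝ) (hgcont : ContinuousOn g Z) (hgconc : ConcaveOn ℝ Z g)
    (hgbd : ∀ z ∈ Z, |g z| ≤ ε * t)
    (hint : ∫ z in Z, Real.exp (g z) ≤ 2 * Real.exp (ε ^ 2 / 3 * t) * (volume Z).toReal)
    (α : ℝ) (hα0 : 0 < α) (hα1 : α < 4 * ε * t)
    (hα2 : 1 < Real.exp (α / 2) * (α / (4 * ε * t)) ^ N * (volume Z).toReal) :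
    ∀ z ∈ Z, Real.exp (g z) ≤ 2 * Real.exp (ε ^ 2 / 3 * t + α) * (volume Z).toReal := by
  intro z hz
  have hεt : 0 < 4 * ε * t := by positivity
  have hlow := hgconc.exp_mul_volume_le_setIntegral hvol_fin hgcont hgbd
    (div_pos hα0 hεt) ((div_le_one hεt).mpr hα1.le) hz
  have hexp : g z - 2 * (α / (4 * ε * t)) * (ε * t) = g z + α / 2 - α := by
    field_simp
    ring
  rw [hexp, Real.exp_sub, Real.exp_add, div_mul_eq_mul_div] at hlow
  have hle := (div_le_iff₀ (Real.exp_pos α)).mp (hlow.trans hint)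
  rw [Real.exp_add]
  have hge := mul_le_mul_of_nonneg_left hα2.le (Real.exp_pos (g z)).le
  linarith
end

section
/- Let Z ⊆ ℝ^N be a convex set, M > 0 a real number, g : Z → ℝ a continuous concave function with |g(z)| ≤ M for all z ∈ Z, let z* ∈ Z, and let α be a real with 0 < α < 4M. Set λ* = α/(4M) and Z⁺ = {z ∈ Z : g(z) ≥ g(z*) − α/2}. Then Z is contained in the dilation {z* + (1/λ*)(z − z*) : z ∈ Z⁺} of Z⁺ about z*. -/
/-- Key geometric claim in the proof of Lemma 2 of the paper: for a continuous concave
function `g` bounded by `M` on a convex set `Z`, the whole set `Z` is contained in the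
dilation of the superlevel set `Z⁺ = {z ∈ Z : g(z) ≥ g(z*) − α/2}` about `z*` by the
factor `1/λ* = 4M/α`. -/
theorem stmt_1 {N : ℕ} (Z : Set (Fin N → ℝ)) (hZconv : Convex ℝ Z)
    (M : ℝ) (hM : 0 < M)
    (g : (Fin N → ℝ) → ℝ) (hgcont : ContinuousOn g Z) (hgconc : ConcaveOn ℝ Z g)
    (hgbd : ∀ z ∈ Z, |g z| ≤ M)
    (zstar : Fin N → ℝ) (hzstar : zstar ∈ Z)
    (α : ℝ) (hα0 : 0 < α) (hα1 : α < 4 * M) :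
    Z ⊆ (fun z => zstar + (1 / (α / (4 * M))) • (z - zstar)) ''
      {z ∈ Z | g zstar - α / 2 ≤ g z} := by
  intro z hz
  set l := α / (4 * M) with hl
  have hl0 : 0 < l := by positivity
  have hl1 : l < 1 := (div_lt_one (by positivity)).2 hα1
  have hlM : l * (2 * M) = α / 2 := by
    rw [hl]
    field_simp
    norm_num
  refine ⟨(1 - l) • zstar + l • z,
    ⟨hZconv hzstar hz (by linarith) hl0.le (by ring), ?_⟩, ?_⟩
  · have hconc := hgconc.2 hzstar hz (sub_nonneg.2 hl1.le) hl0.le (by ring)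
    simp only [smul_eq_mul] at hconc
    have hdrop : l * (g zstar - g z) ≤ l * (2 * M) := by
      have := (abs_le.1 (hgbd zstar hzstar)).2
      have := (abs_le.1 (hgbd z hz)).1
      gcongr
      linarith
    linarith
  · ext i
    simp only [Pi.add_apply, Pi.smul_apply, Pi.sub_apply, smul_eq_mul]
    field_simp
    ring
end

section
/- There exists an absolute constant C > 0 with the following property: for every real ε ∈ (0,1), every integer N ≥ 1, every real R ≥ 2, and every real V with R^{−N} ≤ V ≤ R^N, there exist real numbers α and t satisfying simultaneously (i) 0 < α < 4εt, (ii) e^{α/2} (α/(4εt))^N V > 1, (iii) t ≥ (6/ε²)(α + max{0, ln(2V)}), and (iv) t ≤ C (N/ε²) ln(R/ε). -/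
/-- Lemma 4 of the paper: for any `ε ∈ (0,1)`, `N ≥ 1`, `R ≥ 2` and volume `V` with
`R^{-N} ≤ V ≤ R^N`, there exist `α` and `t = O((N/ε²) ln(R/ε))` satisfying the three
conditions (4.1), (4.2), (4.3) needed for convergence of the randomized fictitious play. -/
theorem stmt_3 : ∃ C : ℝ, 0 < C ∧
    ∀ (ε : ℝ), 0 < ε → ε < 1 → ∀ (N : ℕ), 1 ≤ N → ∀ (R : ℝ), 2 ≤ R →
    ∀ (V : ℝ), (R ^ N)⁻¹ ≤ V → V ≤ R ^ N →
    ∃ α t : ℝ, (0 < α ∧ α < 4 * ε * t) ∧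
      1 < Real.exp (α / 2) * (α / (4 * ε * t)) ^ N * V ∧
      6 / ε ^ 2 * (α + max 0 (Real.log (2 * V))) ≤ t ∧
      t ≤ C * ((N : ℝ) / ε ^ 2) * Real.log (R / ε) := by
  refine ⟨96, by norm_num, fun ε hε hε1 N hN R hR V hV hV' => ?_⟩
  have hR0 : 0 < R := by linarith
  have hN0 : (1 : ℝ) ≤ N := by exact_mod_cast hN
  have hV0 : 0 < V := lt_of_lt_of_le (by positivity) hV
  have hRq : R ≤ R / ε := by
    rw [le_div_iff₀ hε]
    nlinarith
  have hq : 2 ≤ R / ε := hR.trans hRq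
  have hL : 0 < Real.log (R / ε) := Real.log_pos (by linarith)
  have hq0 : 0 < R / ε := by linarith
  set L := Real.log (R / ε) with hLdef
  have hNL : L ≤ N * L := by nlinarith
  have hNL0 : 0 < N * L := by linarith
  refine ⟨14 * (N * L), 96 * (N * L) / ε ^ 2, ⟨by positivity, ?_⟩, ?_, ?_, ?_⟩
  · have h : 4 * ε * (96 * (N * L) / ε ^ 2) = 384 * (N * L) / ε := by
      field_simp
      norm_num
    rw [h, lt_div_iff₀ hε]
    nlinarith
  · have hexp : Real.exp (14 * (N * L) / 2) = ((R / ε) ^ 7) ^ N := by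
      have h : 14 * (N * L) / 2 = N * ((7 : ℕ) * L) := by
        push_cast
        ring
      rw [h, Real.exp_nat_mul, Real.exp_nat_mul, Real.exp_log hq0]
    have hratio : 14 * (N * L) / (4 * ε * (96 * (N * L) / ε ^ 2)) = 7 * ε / 192 := by
      generalize (N : ℝ) * L = x at hNL0
      field_simp
      norm_num
    have hbase : 1 < (R / ε) ^ 7 * (7 * ε / 192) * R⁻¹ := by
      have h : (R / ε) ^ 7 * (7 * ε / 192) * R⁻¹ = (R / ε) ^ 6 * (7 / 192) := by
        field_simp
      have h64 : (2 : ℝ) ^ 6 ≤ (R / ε) ^ 6 := by gcongr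
      rw [h]
      linarith
    rw [hexp, hratio]
    calc 1 < ((R / ε) ^ 7 * (7 * ε / 192) * R⁻¹) ^ N := one_lt_pow₀ hbase (by omega)
      _ = ((R / ε) ^ 7) ^ N * (7 * ε / 192) ^ N * (R ^ N)⁻¹ := by
        rw [mul_pow, mul_pow, inv_pow]
      _ ≤ ((R / ε) ^ 7) ^ N * (7 * ε / 192) ^ N * V := by gcongr
  · have hlogV : Real.log (2 * V) ≤ 2 * (N * L) := by
      calc Real.log (2 * V) ≤ Real.log (R / ε * (R / ε) ^ N) := by
            apply Real.log_le_log (by positivity)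
            have : V ≤ (R / ε) ^ N := hV'.trans (by gcongr)
            gcongr
        _ = L + N * L := by
          rw [Real.log_mul hq0.ne' (by positivity), Real.log_pow]
        _ ≤ 2 * (N * L) := by linarith
    have hmax : max 0 (Real.log (2 * V)) ≤ 2 * (N * L) := max_le (by positivity) hlogV
    calc 6 / ε ^ 2 * (14 * (N * L) + max 0 (Real.log (2 * V)))
        ≤ 6 / ε ^ 2 * (14 * (N * L) + 2 * (N * L)) := by gcongr
      _ = 96 * (N * L) / ε ^ 2 := by ring
  · exact le_of_eq (by ring)
end

section
/- Let ε ∈ (0,1) be real, N ≥ 1 an integer, and V a real with 0 < V ≤ 1/2. Define α = 2(N ln(25/ε) − ln V) and t = 6α/ε². Then (i) 0 < α < 4εt, (ii) e^{α/2} (α/(4εt))^N V > 1, and (iii) t ≥ (6/ε²)(α + max{0, ln(2V)}). -/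
/-- The small-volume case (`vol(Z) ≤ 1/2`) of Lemma 4 of the paper: the explicit choices
`α = 2(N ln(25/ε) − ln V)` and `t = 6α/ε²` satisfy conditions (4.1), (4.2), (4.3). -/
theorem stmt_4 (ε : ℝ) (hε0 : 0 < ε) (hε1 : ε < 1) (N : ℕ) (hN : 1 ≤ N)
    (V : ℝ) (hV0 : 0 < V) (hV : V ≤ 1 / 2)
    (α t : ℝ)
    (hα : α = 2 * ((N : ℝ) * Real.log (25 / ε) - Real.log V))
    (ht : t = 6 * α / ε ^ 2) :
    (0 < α ∧ α < 4 * ε * t) ∧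
      1 < Real.exp (α / 2) * (α / (4 * ε * t)) ^ N * V ∧
      6 / ε ^ 2 * (α + max 0 (Real.log (2 * V))) ≤ t := by
  have hlog : 0 < Real.log (25 / ε) := Real.log_pos (by rw [lt_div_iff₀ hε0]; linarith)
  have hlogV : Real.log V < 0 := Real.log_neg hV0 (by linarith)
  have hα0 : 0 < α := by
    have : 0 ≤ (N : ℝ) * Real.log (25 / ε) := by positivity
    linarith
  have hden : 4 * ε * t = 24 / ε * α := by
    rw [ht]
    field_simp
    norm_num
  have hratio : α / (4 * ε * t) = ε / 24 := by
    rw [hden]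
    field_simp
  have hexp : Real.exp (α / 2) = (25 / ε) ^ N / V := by
    have hhalf : α / 2 = N * Real.log (25 / ε) - Real.log V := by linarith
    rw [hhalf, Real.exp_sub, Real.exp_log hV0, Real.exp_nat_mul,
      Real.exp_log (by positivity)]
  refine ⟨⟨hα0, ?_⟩, ?_, ?_⟩
  · rw [hden]
    exact lt_mul_of_one_lt_left hα0 (by rw [lt_div_iff₀ hε0]; linarith)
  · have hprod : (25 / ε) ^ N / V * (ε / 24) ^ N * V = (25 / 24 : ℝ) ^ N := by
      rw [div_mul_eq_mul_div, div_mul_cancel₀ _ hV0.ne', ← mul_pow]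
      congr 1
      field_simp
    rw [hratio, hexp, hprod]
    exact one_lt_pow₀ (by norm_num) (by omega)
  · rw [max_eq_left (Real.log_nonpos (by linarith) (by linarith)), ht, add_zero,
      div_mul_eq_mul_div]
end

section
/- Let ε ∈ (0,1) be real, N ≥ 1 an integer, and V a real with V > 1/2. Define α = max{4(ln 2 + N ln(24/ε)), 2√(N ln(2V))} and t = (6/ε²)(α + ln(2V)). Then (i) 0 < α < 4εt, (ii) e^{α/2} (α/(4εt))^N V > 1, and (iii) t ≥ (6/ε²)(α + max{0, ln(2V)}). -/
/-- The large-volume case (`vol(Z) > 1/2`) of Lemma 4 of the paper: the explicit choices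
`α = max{4(ln 2 + N ln(24/ε)), 2√(N ln(2V))}` and `t = (6/ε²)(α + ln(2V))` satisfy
conditions (4.1), (4.2), (4.3). -/
theorem stmt_5 (ε : ℝ) (hε0 : 0 < ε) (hε1 : ε < 1) (N : ℕ) (hN : 1 ≤ N)
    (V : ℝ) (hV : 1 / 2 < V)
    (α t : ℝ)
    (hα : α = max (4 * (Real.log 2 + (N : ℝ) * Real.log (24 / ε)))
      (2 * Real.sqrt ((N : ℝ) * Real.log (2 * V))))
    (ht : t = 6 / ε ^ 2 * (α + Real.log (2 * V))) :
    (0 < α ∧ α < 4 * ε * t) ∧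
      1 < Real.exp (α / 2) * (α / (4 * ε * t)) ^ N * V ∧
      6 / ε ^ 2 * (α + max 0 (Real.log (2 * V))) ≤ t := by
  have hL : 0 < Real.log (2 * V) := Real.log_pos (by linarith)
  set L := Real.log (2 * V)
  have hN' : (0 : ℝ) < N := by exact_mod_cast hN
  have hε24 : 1 < 24 / ε := by rw [lt_div_iff₀ hε0]; linarith
  have hlog24 : 0 < Real.log (24 / ε) := Real.log_pos hε24
  have hα₁ : Real.log 2 + (N : ℝ) * Real.log (24 / ε) ≤ α / 4 := by
    have := hα ▸ le_max_left (4 * (Real.log 2 + (N : ℝ) * Real.log (24 / ε)))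
      (2 * Real.sqrt ((N : ℝ) * L))
    linarith
  have hα₂ : 2 * Real.sqrt ((N : ℝ) * L) ≤ α := hα ▸ le_max_right _ _
  have hα0 : 0 < α := by
    have := Real.log_pos one_lt_two
    have := mul_pos hN' hlog24
    linarith
  have h4εt : 4 * ε * t = 24 / ε * (α + L) := by
    rw [ht]; field_simp; ring
  have hsq : (N : ℝ) * L ≤ α / 4 * α := by
    have h := Real.sq_sqrt (mul_pos hN' hL).le
    nlinarith [Real.sqrt_nonneg ((N : ℝ) * L)]
  have hexp₁ : 2 * (24 / ε) ^ N ≤ Real.exp (α / 4) := by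
    rw [← Real.log_le_iff_le_exp (by positivity),
      Real.log_mul two_ne_zero (by positivity), Real.log_pow]
    exact hα₁
  have hexp₂ : (1 + L / α) ^ N ≤ Real.exp (α / 4) := by
    calc (1 + L / α) ^ N ≤ Real.exp (L / α) ^ N := by
          gcongr
          linarith [Real.add_one_le_exp (L / α)]
      _ = Real.exp (N * (L / α)) := (Real.exp_nat_mul _ _).symm
      _ ≤ Real.exp (α / 4) := by
          gcongr
          rwa [← mul_div_assoc, div_le_iff₀ hα0]
  have hlt : α < 4 * ε * t := by
    rw [h4εt]; nlinarith
  have ht0 : 0 < 4 * ε * t := hα0.trans hlt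
  refine ⟨⟨hα0, hlt⟩, ?_, by rw [max_eq_right hL.le, ht]⟩
  have hratio : 24 / ε * (1 + L / α) = 4 * ε * t / α := by
    rw [h4εt]; field_simp
  have hexp : 2 * (4 * ε * t / α) ^ N ≤ Real.exp (α / 2) := by
    calc 2 * (4 * ε * t / α) ^ N = 2 * (24 / ε) ^ N * (1 + L / α) ^ N := by
          rw [← hratio, mul_pow, mul_assoc]
      _ ≤ Real.exp (α / 4) * Real.exp (α / 4) := by gcongr
      _ = Real.exp (α / 2) := by rw [← Real.exp_add]; ring_nf
  have hpow : 0 < (α / (4 * ε * t)) ^ N := by positivity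
  have hcancel : (4 * ε * t / α) ^ N * (α / (4 * ε * t)) ^ N = 1 := by
    rw [← mul_pow, div_mul_div_cancel₀ hα0.ne', div_self ht0.ne', one_pow]
  have htwo : 2 ≤ Real.exp (α / 2) * (α / (4 * ε * t)) ^ N := by
    have := mul_le_mul_of_nonneg_right hexp hpow.le
    rwa [mul_assoc, hcancel, mul_one] at this
  nlinarith
end

section
/- Let X ⊆ ℝ^m be a nonempty bounded convex set of finite positive Lebesgue measure, Y ⊆ ℝ^n a convex set, and F : X × Y → ℝ a continuous function with |F(ξ,η)| ≤ 1 for all (ξ,η) and such that F(ξ,·) is concave on Y for every ξ ∈ X. Let ε ∈ (0,1], t ≥ 0 be reals, let y, η ∈ Y, and set y' = (t/(t+1)) y + (1/(t+1)) η (which lies in Y by convexity). Then ∫_X e^{−(ε(t+1)/2) F(ξ, y')} dξ ≤ ∫_X e^{−(εt/2) F(ξ, y)} (1 + ε²/6 − (ε/2) F(ξ, η)) dξ. -/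
open MeasureTheory

/-- A quadratic upper bound for the exponential near zero. -/
lemma exp_le_one_add_add_sq {x : ℝ} (hx : |x| ≤ 1 / 2) :
    Real.exp x ≤ 1 + x + 2 / 3 * x ^ 2 := by
  have h := (abs_le.mp (Real.exp_bound (x := x) (by linarith) (n := 3) (by norm_num))).2
  norm_num [Finset.sum_range_succ, Nat.factorial] at h
  have h3 : |x| ^ 3 ≤ 1 / 2 * x ^ 2 := by
    rw [pow_succ', sq_abs]
    gcongr
  linarith [sq_nonneg x]

/-- The pointwise inequality behind the one-step bound on the potential: `a`, `b` and `c` are the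
values of a concave function at two points and at their convex combination. -/
lemma exp_neg_mul_le_of_concave {ε t a b c : ℝ} (hε0 : 0 ≤ ε) (hε1 : ε ≤ 1) (ht : 0 ≤ t)
    (hb : |b| ≤ 1) (hc : t / (t + 1) * a + 1 / (t + 1) * b ≤ c) :
    Real.exp (-(ε * (t + 1) / 2) * c)
      ≤ Real.exp (-(ε * t / 2) * a) * (1 + ε ^ 2 / 6 - ε / 2 * b) := by
  have hc' : t * a + b ≤ (t + 1) * c := by
    have ht' : 0 < t + 1 := by linarith
    calc t * a + b = (t + 1) * (t / (t + 1) * a + 1 / (t + 1) * b) := by field_simp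
      _ ≤ (t + 1) * c := by gcongr
  have hδ : |-(ε / 2) * b| ≤ 1 / 2 := by
    rw [abs_mul, abs_neg, abs_of_nonneg (by positivity)]
    nlinarith [abs_nonneg b]
  have hb2 : ε ^ 2 * b ^ 2 ≤ ε ^ 2 :=
    mul_le_of_le_one_right (sq_nonneg ε) ((sq_le_one_iff_abs_le_one b).mpr hb)
  calc Real.exp (-(ε * (t + 1) / 2) * c)
      ≤ Real.exp (-(ε * t / 2) * a + -(ε / 2) * b) := by
        gcongr
        nlinarith
    _ = Real.exp (-(ε * t / 2) * a) * Real.exp (-(ε / 2) * b) := Real.exp_add _ _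
    _ ≤ Real.exp (-(ε * t / 2) * a) * (1 + ε ^ 2 / 6 - ε / 2 * b) := by
        gcongr
        linarith [exp_le_one_add_add_sq hδ]

/-- The one-step bound on the minimizer's potential `‖p(t+1)‖₁` from the proof of Lemma 1
of the paper, using concavity of `F(ξ,·)` and `e^δ ≤ 1 + δ + (2/3)δ²` for `|δ| ≤ 1/2`. -/
theorem stmt_6 {m n : ℕ} (X : Set (Fin m → ℝ)) (Y : Set (Fin n → ℝ))
    (hXne : X.Nonempty) (hXbd : Bornology.IsBounded X) (hXconv : Convex ℝ X)
    (hX0 : 0 < volume X) (hXfin : volume X < ⊤)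
    (hYconv : Convex ℝ Y)
    (F : (Fin m → ℝ) → (Fin n → ℝ) → ℝ)
    (hFcont : ContinuousOn (fun p : (Fin m → ℝ) × (Fin n → ℝ) => F p.1 p.2) (X ×ˢ Y))
    (hFbd : ∀ ξ ∈ X, ∀ η ∈ Y, |F ξ η| ≤ 1)
    (hFconc : ∀ ξ ∈ X, ConcaveOn ℝ Y fun η => F ξ η)
    (ε t : ℝ) (hε0 : 0 < ε) (hε1 : ε ≤ 1) (ht : 0 ≤ t)
    (y η : Fin n → ℝ) (hy : y ∈ Y) (hη : η ∈ Y) :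
    ∫ ξ in X, Real.exp (-(ε * (t + 1) / 2) *
        F ξ ((t / (t + 1)) • y + (1 / (t + 1)) • η))
      ≤ ∫ ξ in X, Real.exp (-(ε * t / 2) * F ξ y) *
        (1 + ε ^ 2 / 6 - ε / 2 * F ξ η) := by
  have hXi : (interior X : Set (Fin m → ℝ)) =ᵐ[volume] X :=
    interior_ae_eq_of_null_frontier (hXconv.addHaar_frontier volume)
  rw [← setIntegral_congr_set hXi, ← setIntegral_congr_set hXi]
  have hcont : ∀ z ∈ Y, ContinuousOn (fun ξ => F ξ z) (interior X) := fun z hz =>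
    hFcont.comp (f := fun ξ => (ξ, z)) (by fun_prop) fun ξ hξ => ⟨interior_subset hξ, hz⟩
  have hmeas : MeasurableSet (interior X) := isOpen_interior.measurableSet
  have hint : IntegrableOn (fun ξ => Real.exp (-(ε * t / 2) * F ξ y) *
      (1 + ε ^ 2 / 6 - ε / 2 * F ξ η)) (interior X) := by
    have hcy := hcont y hy
    have hcη := hcont η hη
    refine IntegrableOn.of_bound ((measure_mono interior_subset).trans_lt hXfin)
      (ContinuousOn.aestronglyMeasurable (by fun_prop) hmeas) (Real.exp (ε * t / 2) * 2)
      (ae_restrict_of_forall_mem hmeas fun ξ hξ => ?_)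
    have hFy := abs_le.mp (hFbd ξ (interior_subset hξ) y hy)
    have hFη := abs_le.mp (hFbd ξ (interior_subset hξ) η hη)
    have hεt : 0 ≤ ε * t := by positivity
    rw [norm_mul, Real.norm_eq_abs, Real.abs_exp, Real.norm_eq_abs]
    gcongr
    · nlinarith
    · rw [abs_le]
      constructor <;> nlinarith
  refine integral_mono_of_nonneg (Filter.Eventually.of_forall fun _ => (Real.exp_pos _).le) hint
    (ae_restrict_of_forall_mem hmeas fun ξ hξ => ?_)
  have hξX := interior_subset hξ
  exact exp_neg_mul_le_of_concave hε0.le hε1 ht (hFbd ξ hξX η hη)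
    ((hFconc ξ hξX).2 hy hη (by positivity) (by positivity) (by field_simp))
end

section
/- Let X ⊆ ℝ^m and Y ⊆ ℝ^n be nonempty bounded convex sets of finite positive Lebesgue measure, and let F : X × Y → ℝ be a continuous convex-concave function with |F(ξ,η)| ≤ 1 for all (ξ,η). Let ε ∈ (0,1] and t ≥ 0 be reals and fix x ∈ X, y ∈ Y. Define p(ξ) = e^{−(εt/2) F(ξ, y)} for ξ ∈ X and q(η) = e^{(εt/2) F(x, η)} for η ∈ Y, with ‖p‖₁ = ∫_X p(ξ) dξ and ‖q‖₁ = ∫_Y q(η) dη, and for (ξ,η) ∈ X × Y define P(ξ,η) = ∫_X e^{−(ε(t+1)/2) F(ξ', (t y + η)/(t+1))} dξ' and Q(ξ,η) = ∫_Y e^{(ε(t+1)/2) F((t x + ξ)/(t+1), η')} dη'. Then ∫_X ∫_Y P(ξ,η) Q(ξ,η) p(ξ) q(η) dη dξ ≤ (1 + ε²/6)² ‖p‖₁² ‖q‖₁². -/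
open MeasureTheory

/-- For `|s| ≤ ε / 2` with `0 ≤ ε ≤ 1`, one has `cosh s ≤ 1 + ε ^ 2 / 6`. -/
lemma exp_neg_add_exp_le {ε s : ℝ} (hε0 : 0 ≤ ε) (hε1 : ε ≤ 1) (hs : |s| ≤ ε / 2) :
    Real.exp (-s) + Real.exp s ≤ 2 * (1 + ε ^ 2 / 6) := by
  have hcosh := Real.cosh_le_exp_half_sq s
  rw [Real.cosh_eq] at hcosh
  have hsq : s ^ 2 / 2 ≤ ε ^ 2 / 8 := by
    have := sq_le_sq' (abs_le.1 hs).1 (abs_le.1 hs).2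
    linarith
  have hexp : Real.exp (s ^ 2 / 2) ≤ Real.exp (ε ^ 2 / 8) := Real.exp_le_exp.2 hsq
  have hone : 1 - ε ^ 2 / 8 ≤ Real.exp (-(ε ^ 2 / 8)) := Real.one_sub_le_exp_neg _
  have hmul : Real.exp (-(ε ^ 2 / 8)) * Real.exp (ε ^ 2 / 8) = 1 := by
    rw [← Real.exp_add]; simp
  have hε2 : ε ^ 2 ≤ 1 := by nlinarith
  have hbound : Real.exp (ε ^ 2 / 8) ≤ 1 + ε ^ 2 / 6 := by
    have hle : (1 - ε ^ 2 / 8) * Real.exp (ε ^ 2 / 8) ≤ 1 :=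
      (mul_le_mul_of_nonneg_right hone (Real.exp_pos _).le).trans_eq hmul
    have hge : 1 ≤ (1 - ε ^ 2 / 8) * (1 + ε ^ 2 / 6) := by nlinarith [sq_nonneg ε]
    exact le_of_mul_le_mul_left (hle.trans hge) (by linarith)
  linarith

/-- If `k₁ + k₂ ≤ 2 c w`, then `(∫ k₁) (∫ k₂) ≤ c ^ 2 (∫ w) ^ 2`. -/
lemma integral_mul_integral_le_sq {α : Type*} [MeasurableSpace α] {μ : Measure α}
    {k₁ k₂ w : α → ℝ} {c : ℝ} (hk₁ : Integrable k₁ μ) (hk₂ : Integrable k₂ μ)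
    (hw : Integrable w μ) (hk₁0 : 0 ≤ᵐ[μ] k₁) (hk₂0 : 0 ≤ᵐ[μ] k₂)
    (h : ∀ᵐ z ∂μ, k₁ z + k₂ z ≤ 2 * c * w z) :
    (∫ z, k₁ z ∂μ) * (∫ z, k₂ z ∂μ) ≤ c ^ 2 * (∫ z, w z ∂μ) ^ 2 := by
  have hsum : (∫ z, k₁ z ∂μ) + (∫ z, k₂ z ∂μ) ≤ 2 * c * ∫ z, w z ∂μ := by
    rw [← integral_add hk₁ hk₂, ← integral_const_mul]
    exact integral_mono_ae (hk₁.add hk₂) (hw.const_mul _) h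
  have h₁ : 0 ≤ ∫ z, k₁ z ∂μ := integral_nonneg_of_ae hk₁0
  have h₂ : 0 ≤ ∫ z, k₂ z ∂μ := integral_nonneg_of_ae hk₂0
  nlinarith [sq_nonneg ((∫ z, k₁ z ∂μ) - ∫ z, k₂ z ∂μ),
    mul_self_le_mul_self (add_nonneg h₁ h₂) hsum]

/-- A pointwise bound on `f ξ η * q η` bounds the iterated integral; no measurability of `f` or
`q` is needed. -/
lemma integral_integral_mul_le_integral_prod {α β : Type*} [MeasurableSpace α]
    [MeasurableSpace β] {μ : Measure α} {ν : Measure β} [SFinite μ] [SFinite ν]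
    {f : α → β → ℝ} {q : β → ℝ} {k : α × β → ℝ} (hk : Integrable k (μ.prod ν))
    (hf : ∀ ξ η, 0 ≤ f ξ η) (hq : ∀ η, 0 ≤ q η)
    (h : ∀ᵐ η ∂ν, ∀ᵐ ξ ∂μ, f ξ η * q η ≤ k (ξ, η)) :
    ∫ η, (∫ ξ, f ξ η ∂μ) * q η ∂ν ≤ ∫ z, k z ∂(μ.prod ν) := by
  rw [integral_prod_symm _ hk]
  refine integral_mono_of_nonneg
    (.of_forall fun η => mul_nonneg (integral_nonneg fun ξ => hf ξ η) (hq η))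
    hk.integral_prod_right ?_
  filter_upwards [h, hk.prod_left_ae] with η hη hkη
  rw [← integral_mul_const]
  exact integral_mono_of_nonneg (.of_forall fun ξ => mul_nonneg (hf ξ η) (hq η)) hkη hη

/-- A convex set in a finite-dimensional space agrees with its interior up to a null set. -/
lemma Convex.restrict_interior_eq {E : Type*} [NormedAddCommGroup E] [NormedSpace ℝ E]
    [MeasurableSpace E] [BorelSpace E] [FiniteDimensional ℝ E] (μ : Measure E)
    [μ.IsAddHaarMeasure] {s : Set E} (hs : Convex ℝ s) :
    μ.restrict (interior s) = μ.restrict s :=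
  Measure.restrict_congr_set (interior_ae_eq_of_null_frontier (hs.addHaar_frontier μ))

/-- The exponential of a continuous function bounded above is integrable on a measurable set of
finite measure. -/
lemma integrableOn_exp_of_bound {α : Type*} [TopologicalSpace α] [MeasurableSpace α]
    [OpensMeasurableSpace α] [SecondCountableTopologyEither α ℝ] {μ : Measure α} {s : Set α}
    (hs : MeasurableSet s) (hμs : μ s < ⊤) {g : α → ℝ} {C : ℝ} (hg : ContinuousOn g s)
    (hC : ∀ z ∈ s, g z ≤ C) : IntegrableOn (fun z => Real.exp (g z)) s μ := by
  have : IsFiniteMeasure (μ.restrict s) := isFiniteMeasure_restrict.2 hμs.ne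
  refine Integrable.of_bound (hg.rexp.aestronglyMeasurable hs) (Real.exp C) ?_
  filter_upwards [ae_restrict_mem hs] with z hz
  rw [Real.norm_eq_abs, Real.abs_exp]
  exact Real.exp_le_exp.2 (hC z hz)

/-- The conditional form of Lemma 1 of the paper: when `ξ` and `η` are sampled
independently with densities proportional to `p` and `q`, the expected potential
`Φ(t+1) = P(ξ,η)·Q(ξ,η)` is at most `(1 + ε²/6)² Φ(t)`, where `Φ(t) = ‖p‖₁‖q‖₁`. -/
theorem stmt_7 {m n : ℕ} (X : Set (Fin m → ℝ)) (Y : Set (Fin n → ℝ))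
    (hXne : X.Nonempty) (hYne : Y.Nonempty)
    (hXbd : Bornology.IsBounded X) (hYbd : Bornology.IsBounded Y)
    (hXconv : Convex ℝ X) (hYconv : Convex ℝ Y)
    (hX0 : 0 < volume X) (hXfin : volume X < ⊤)
    (hY0 : 0 < volume Y) (hYfin : volume Y < ⊤)
    (F : (Fin m → ℝ) → (Fin n → ℝ) → ℝ)
    (hFcont : ContinuousOn (fun p : (Fin m → ℝ) × (Fin n → ℝ) => F p.1 p.2) (X ×ˢ Y))
    (hFconv : ∀ η ∈ Y, ConvexOn ℝ X fun ξ => F ξ η)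
    (hFconc : ∀ ξ ∈ X, ConcaveOn ℝ Y fun η => F ξ η)
    (hFbd : ∀ ξ ∈ X, ∀ η ∈ Y, |F ξ η| ≤ 1)
    (ε t : ℝ) (hε0 : 0 < ε) (hε1 : ε ≤ 1) (ht : 0 ≤ t)
    (x : Fin m → ℝ) (hx : x ∈ X) (y : Fin n → ℝ) (hy : y ∈ Y) :
    (∫ ξ in X, ∫ η in Y,
        (∫ ξ' in X, Real.exp (-(ε * (t + 1) / 2) * F ξ' ((t + 1)⁻¹ • (t • y + η)))) *
          (∫ η' in Y, Real.exp (ε * (t + 1) / 2 * F ((t + 1)⁻¹ • (t • x + ξ)) η')) *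
          (Real.exp (-(ε * t / 2) * F ξ y) * Real.exp (ε * t / 2 * F x η)))
      ≤ (1 + ε ^ 2 / 6) ^ 2 * (∫ ξ in X, Real.exp (-(ε * t / 2) * F ξ y)) ^ 2 *
        (∫ η in Y, Real.exp (ε * t / 2 * F x η)) ^ 2 := by
  rw [← hXconv.restrict_interior_eq volume, ← hYconv.restrict_interior_eq volume]
  set U := interior X
  set V := interior Y
  have hUX : U ⊆ X := interior_subset
  have hVY : V ⊆ Y := interior_subset
  have hUm : MeasurableSet U := isOpen_interior.measurableSet
  have hVm : MeasurableSet V := isOpen_interior.measurableSet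
  set μ := (volume : Measure (Fin m → ℝ)).restrict U
  set ν := (volume : Measure (Fin n → ℝ)).restrict V
  have hμν : μ.prod ν = (volume.prod volume).restrict (U ×ˢ V) := Measure.prod_restrict U V
  have hUVm : MeasurableSet (U ×ˢ V) := hUm.prod hVm
  have hUVfin : (volume.prod volume : Measure ((Fin m → ℝ) × (Fin n → ℝ))) (U ×ˢ V) < ⊤ := by
    rw [Measure.prod_prod]
    exact ENNReal.mul_lt_top ((measure_mono hUX).trans_lt hXfin)
      ((measure_mono hVY).trans_lt hYfin)
  have hFUV : ContinuousOn (fun z : (Fin m → ℝ) × (Fin n → ℝ) => F z.1 z.2) (U ×ˢ V) :=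
    hFcont.mono (Set.prod_mono hUX hVY)
  have hFy : ContinuousOn (fun z : (Fin m → ℝ) × (Fin n → ℝ) => F z.1 y) (U ×ˢ V) :=
    hFcont.comp (f := fun z : (Fin m → ℝ) × (Fin n → ℝ) => (z.1, y)) (by fun_prop)
      fun z hz => ⟨hUX hz.1, hy⟩
  have hFx : ContinuousOn (fun z : (Fin m → ℝ) × (Fin n → ℝ) => F x z.2) (U ×ˢ V) :=
    hFcont.comp (f := fun z : (Fin m → ℝ) × (Fin n → ℝ) => (x, z.2)) (by fun_prop)
      fun z hz => ⟨hx, hVY hz.2⟩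
  have hεt : 0 ≤ ε * t / 2 := by positivity
  -- the weight `p ⊗ q` tilted by `exp (a F)`
  let k : ℝ → (Fin m → ℝ) × (Fin n → ℝ) → ℝ := fun a z =>
    Real.exp (-(ε * t / 2) * F z.1 y + ε * t / 2 * F x z.2 + a * F z.1 z.2)
  have hk : ∀ a, Integrable (k a) (μ.prod ν) := fun a => by
    rw [hμν]
    refine integrableOn_exp_of_bound (C := ε * t / 2 + ε * t / 2 + |a|) hUVm hUVfin
      (((hFy.const_mul _).add (hFx.const_mul _)).add (hFUV.const_mul _)) fun z hz => ?_
    have h₁ := abs_le.1 (hFbd z.1 (hUX hz.1) y hy)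
    have h₂ := abs_le.1 (hFbd x hx z.2 (hVY hz.2))
    have h₃ : a * F z.1 z.2 ≤ |a| := (le_abs_self _).trans <| by
      rw [abs_mul]
      exact mul_le_of_le_one_right (abs_nonneg a) (hFbd z.1 (hUX hz.1) z.2 (hVY hz.2))
    nlinarith
  have hP : ∫ η, (∫ ξ', Real.exp (-(ε * (t + 1) / 2) * F ξ' ((t + 1)⁻¹ • (t • y + η))) ∂μ) *
      Real.exp (ε * t / 2 * F x η) ∂ν ≤ ∫ z, k (-(ε / 2)) z ∂(μ.prod ν) := by
    refine integral_integral_mul_le_integral_prod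
      (f := fun ξ' η => Real.exp (-(ε * (t + 1) / 2) * F ξ' ((t + 1)⁻¹ • (t • y + η))))
      (hk _) (fun _ _ => (Real.exp_pos _).le) (fun _ => (Real.exp_pos _).le) ?_
    filter_upwards [ae_restrict_mem hVm] with η hη
    filter_upwards [ae_restrict_mem hUm] with ξ hξ
    have hc := (hFconc ξ (hUX hξ)).2 hy (hVY hη)
      (show 0 ≤ (t + 1)⁻¹ * t by positivity) (show 0 ≤ (t + 1)⁻¹ by positivity) (by field_simp)
    rw [mul_smul _ _ y, ← smul_add _ _ η] at hc
    simp only [smul_eq_mul] at hc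
    rw [← Real.exp_add, Real.exp_le_exp]
    have hm := mul_le_mul_of_nonneg_left hc (show 0 ≤ ε * (t + 1) / 2 by positivity)
    have he : ε * (t + 1) / 2 * ((t + 1)⁻¹ * t * F ξ y + (t + 1)⁻¹ * F ξ η) =
        ε * t / 2 * F ξ y + ε / 2 * F ξ η := by
      field_simp
    linarith
  have hQ : ∫ ξ, (∫ η', Real.exp (ε * (t + 1) / 2 * F ((t + 1)⁻¹ • (t • x + ξ)) η') ∂ν) *
      Real.exp (-(ε * t / 2) * F ξ y) ∂μ ≤ ∫ z, k (ε / 2) z ∂(μ.prod ν) := by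
    rw [← integral_prod_swap]
    refine integral_integral_mul_le_integral_prod
      (f := fun η' ξ => Real.exp (ε * (t + 1) / 2 * F ((t + 1)⁻¹ • (t • x + ξ)) η'))
      (hk _).swap (fun _ _ => (Real.exp_pos _).le) (fun _ => (Real.exp_pos _).le) ?_
    filter_upwards [ae_restrict_mem hUm] with ξ hξ
    filter_upwards [ae_restrict_mem hVm] with η hη
    have hc := (hFconv η (hVY hη)).2 hx (hUX hξ)
      (show 0 ≤ (t + 1)⁻¹ * t by positivity) (show 0 ≤ (t + 1)⁻¹ by positivity) (by field_simp)
    rw [mul_smul _ _ x, ← smul_add _ _ ξ] at hc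
    simp only [smul_eq_mul] at hc
    simp only [k, Prod.swap_prod_mk]
    rw [← Real.exp_add, Real.exp_le_exp]
    have hm := mul_le_mul_of_nonneg_left hc (show 0 ≤ ε * (t + 1) / 2 by positivity)
    have he : ε * (t + 1) / 2 * ((t + 1)⁻¹ * t * F x η + (t + 1)⁻¹ * F ξ η) =
        ε * t / 2 * F x η + ε / 2 * F ξ η := by
      field_simp
    linarith
  have hprod : (∫ z, k (-(ε / 2)) z ∂(μ.prod ν)) * (∫ z, k (ε / 2) z ∂(μ.prod ν)) ≤
      (1 + ε ^ 2 / 6) ^ 2 * (∫ z, k 0 z ∂(μ.prod ν)) ^ 2 := by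
    refine integral_mul_integral_le_sq (hk _) (hk _) (hk _)
      (.of_forall fun _ => (Real.exp_pos _).le) (.of_forall fun _ => (Real.exp_pos _).le) ?_
    rw [hμν]
    filter_upwards [ae_restrict_mem hUVm] with z hz
    have hs : |ε / 2 * F z.1 z.2| ≤ ε / 2 := by
      rw [abs_mul, abs_of_pos (by positivity : 0 < ε / 2)]
      exact mul_le_of_le_one_right (by positivity) (hFbd z.1 (hUX hz.1) z.2 (hVY hz.2))
    have hm := mul_le_mul_of_nonneg_left (exp_neg_add_exp_le hε0.le hε1 hs)
      (Real.exp_pos (-(ε * t / 2) * F z.1 y + ε * t / 2 * F x z.2)).le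
    simp only [k, zero_mul, add_zero]
    rw [mul_add, ← Real.exp_add, ← Real.exp_add, ← neg_mul] at hm
    linarith
  have hk0 : ∫ z, k 0 z ∂(μ.prod ν) =
      (∫ ξ, Real.exp (-(ε * t / 2) * F ξ y) ∂μ) * ∫ η, Real.exp (ε * t / 2 * F x η) ∂ν := by
    rw [← integral_prod_mul]
    simp only [k, zero_mul, add_zero, ← Real.exp_add]
  have hsplit : ∀ (A : (Fin n → ℝ) → ℝ) (B p : (Fin m → ℝ) → ℝ) (q : (Fin n → ℝ) → ℝ),
      ∫ ξ, ∫ η, A η * B ξ * (p ξ * q η) ∂ν ∂μ =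
        (∫ η, A η * q η ∂ν) * ∫ ξ, B ξ * p ξ ∂μ := fun A B p q => by
    rw [← integral_const_mul]
    refine integral_congr_ae (.of_forall fun ξ => ?_)
    simp only
    rw [← integral_mul_const]
    congr 1 with η
    ring
  calc _ = _ := hsplit _ _ _ _
    _ ≤ _ := mul_le_mul hP hQ
      (integral_nonneg fun ξ => mul_nonneg (integral_nonneg fun _ => (Real.exp_pos _).le)
        (Real.exp_pos _).le)
      (integral_nonneg fun _ => (Real.exp_pos _).le)
    _ ≤ _ := hprod
    _ = _ := by rw [hk0]; ring
end

section
/- Let X ⊆ ℝ^m and Y ⊆ ℝ^n be nonempty bounded convex sets of finite positive Lebesgue measure, and let F : X × Y → ℝ be a continuous convex-concave function with |F(ξ,η)| ≤ 1 for all (ξ,η). Let ε ∈ (0,1] and t ≥ 0 be reals and fix x ∈ X, y ∈ Y. Define p(ξ) = e^{−(εt/2) F(ξ, y)}, q(η) = e^{(εt/2) F(x, η)}, ‖p‖₁ = ∫_X p, ‖q‖₁ = ∫_Y q, P(ξ,η) = ∫_X e^{−(ε(t+1)/2) F(ξ', (t y + η)/(t+1))} dξ' and Q(ξ,η) = ∫_Y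 e^{(ε(t+1)/2) F((t x + ξ)/(t+1), η')} dη'. Let p̂ : X → ℝ≥0 and q̂ : Y → ℝ≥0 be integrable functions with ‖p̂‖₁ = ∫_X p̂ > 0 and ‖q̂‖₁ = ∫_Y q̂ > 0 such that for every measurable X' ⊆ X, |∫_{X'} p̂ / ‖p̂‖₁ − ∫_{X'} p / ‖p‖₁| ≤ ε/4, and for every measurable Y' ⊆ Y, |∫_{Y'} q̂ / ‖q̂‖₁ − ∫_{Y'} q / ‖q‖₁| ≤ ε/4. Then (1/(‖p̂‖₁ ‖q̂‖₁)) ∫_X ∫_Y P(ξ,η) Q(ξ,η) p̂(ξ) q̂(η) dη dξ ≤ (1 + (43/36) ε²) ‖p‖₁ ‖q‖₁. -/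
open MeasureTheory

theorem integral_mul_le_of_abs_setIntegral_le {α : Type*} [MeasurableSpace α] {μ : Measure α}
    {S : Set α} (hS : NullMeasurableSet S μ) {h g : α → ℝ} (hh : IntegrableOn h S μ)
    (h0 : ∫ s in S, h s ∂μ = 0) {δ M : ℝ} (hM : 0 ≤ M)
    (hδ : ∀ S' ⊆ S, MeasurableSet S' → |∫ s in S', h s ∂μ| ≤ δ)
    (hg : ∀ᵐ s ∂μ.restrict S, |g s| ≤ M) :
    ∫ s in S, h s * g s ∂μ ≤ 2 * δ * M := by
  obtain ⟨S₀, hS₀, hS₀m, hS₀e⟩ := hS.exists_measurable_subset_ae_eq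
  have hm := hh.aestronglyMeasurable
  have hP : MeasurableSet {s | 0 < hm.mk h s} :=
    measurableSet_lt measurable_const hm.stronglyMeasurable_mk.measurable
  have hpos : ∫ s in S, max (h s) 0 ∂μ = ∫ s in S₀ ∩ {s | 0 < hm.mk h s}, h s ∂μ := by
    rw [← setIntegral_indicator hP, setIntegral_congr_set hS₀e]
    refine integral_congr_ae ?_
    filter_upwards [hm.ae_eq_mk] with s hs
    simp only [Set.indicator, Set.mem_ofPred_eq, ← hs]
    split_ifs with H
    · exact max_eq_left H.le
    · exact max_eq_right (not_lt.1 H)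
  have habs : ∫ s in S, |h s| ∂μ ≤ 2 * δ := by
    have : ∀ s, |h s| = 2 * max (h s) 0 - h s := fun s => by
      rcases le_total 0 (h s) with H | H
      · rw [abs_of_nonneg H, max_eq_left H]; ring
      · rw [abs_of_nonpos H, max_eq_right H]; ring
    simp_rw [this]
    rw [integral_sub (hh.pos_part.const_mul 2) hh, integral_const_mul, h0, hpos, sub_zero]
    have := (abs_le.1 (hδ _ (Set.inter_subset_left.trans hS₀) (hS₀m.inter hP))).2
    linarith
  calc ∫ s in S, h s * g s ∂μ ≤ ‖∫ s in S, h s * g s ∂μ‖ := le_abs_self _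
    _ ≤ ∫ s in S, |h s| * M ∂μ := by
        refine norm_integral_le_of_norm_le (hh.abs.mul_const M) ?_
        filter_upwards [hg] with s hs
        rw [norm_mul]
        exact mul_le_mul_of_nonneg_left hs (abs_nonneg _)
    _ ≤ 2 * δ * M := by
        rw [integral_mul_const]
        exact mul_le_mul_of_nonneg_right habs hM

theorem exp_le_one_add_add_two_thirds_sq {z : ℝ} (hz : |z| ≤ 1 / 2) :
    Real.exp z ≤ 1 + z + 2 / 3 * z ^ 2 := by
  have h := (abs_le.1 (Real.exp_bound (x := z) (by linarith) (n := 3) (by norm_num))).2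
  simp only [Finset.sum_range_succ, Finset.sum_range_zero, Nat.factorial] at h
  norm_num at h
  have h2 : |z| ^ 3 ≤ 1 / 2 * z ^ 2 := by
    rw [← sq_abs z, pow_succ]
    nlinarith [sq_nonneg |z|]
  nlinarith [sq_nonneg z]

theorem ContinuousOn.aestronglyMeasurable_of_nullMeasurableSet {α : Type*} [TopologicalSpace α]
    [MeasurableSpace α] [OpensMeasurableSpace α] {μ : Measure α} {S : Set α} {f : α → ℝ}
    (hf : ContinuousOn f S) (hS : NullMeasurableSet S μ) :
    AEStronglyMeasurable f (μ.restrict S) := by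
  obtain ⟨S₀, hS₀, hS₀m, hS₀e⟩ := hS.exists_measurable_subset_ae_eq
  rw [← Measure.restrict_congr_set hS₀e]
  exact ((hf.mono hS₀).aemeasurable hS₀m).aestronglyMeasurable

theorem IntegrableOn.exp_mul_of_abs_le_one {α : Type*} [TopologicalSpace α]
    [MeasurableSpace α] [OpensMeasurableSpace α] {μ : Measure α} {S : Set α} {f : α → ℝ}
    (hS : NullMeasurableSet S μ) (hSfin : μ S < ⊤) (hf : ContinuousOn f S)
    (hbd : ∀ s ∈ S, |f s| ≤ 1) {c : ℝ} (hc : 0 ≤ c) :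
    IntegrableOn (fun s => Real.exp (c * f s)) S μ := by
  refine IntegrableOn.of_bound hSfin ?_ (Real.exp c) ?_
  · exact (Real.continuous_exp.comp_continuousOn
      (continuousOn_const.mul hf)).aestronglyMeasurable_of_nullMeasurableSet hS
  · filter_upwards [ae_restrict_mem₀ hS] with s hs
    rw [Real.norm_eq_abs, Real.abs_exp, Real.exp_le_exp]
    nlinarith [(abs_le.1 (hbd s hs)).2]

theorem expected_potential_factor_le {E E' : Type*}
    [NormedAddCommGroup E] [NormedSpace ℝ E] [MeasurableSpace E] [BorelSpace E]
    [SecondCountableTopology E] {μ : Measure E} [SFinite μ]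
    [TopologicalSpace E'] [MeasurableSpace E'] [BorelSpace E']
    [SecondCountableTopology E'] {ν : Measure E'} [SFinite ν]
    {S : Set E} {T : Set E'}
    (hS : NullMeasurableSet S μ) (hT : NullMeasurableSet T ν) (hTfin : ν T < ⊤)
    {f : E → E' → ℝ}
    (hfcont : ContinuousOn (fun p : E × E' => f p.1 p.2) (S ×ˢ T))
    (hfconv : ∀ τ ∈ T, ConvexOn ℝ S fun s => f s τ)
    (hfbd : ∀ s ∈ S, ∀ τ ∈ T, |f s τ| ≤ 1)
    {ε t : ℝ} (hε0 : 0 < ε) (hε1 : ε ≤ 1) (ht : 0 ≤ t) {z : E} (hz : z ∈ S)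
    {rhat r : E → ℝ} (hrhat_nn : ∀ s, 0 ≤ rhat s)
    (hrhat : IntegrableOn rhat S μ) (hr : IntegrableOn r S μ)
    (hrhat_pos : 0 < ∫ s in S, rhat s ∂μ) (hr_pos : 0 < ∫ s in S, r s ∂μ)
    (htv : ∀ S' ⊆ S, MeasurableSet S' →
      |(∫ s in S', rhat s ∂μ) / (∫ s in S, rhat s ∂μ) -
        (∫ s in S', r s ∂μ) / (∫ s in S, r s ∂μ)| ≤ ε / 4) :
    (∫ s in S, (∫ τ in T, Real.exp (ε * (t + 1) / 2 * f ((t + 1)⁻¹ • (t • z + s)) τ) ∂ν) *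
        rhat s ∂μ) / (∫ s in S, rhat s ∂μ) ≤
      (1 + 5 / 12 * ε ^ 2) * (∫ τ in T, Real.exp (ε * t / 2 * f z τ) ∂ν) +
        ε / 2 * ((∫ s in S, r s * ∫ τ in T, Real.exp (ε * t / 2 * f z τ) * f s τ ∂ν ∂μ) /
          (∫ s in S, r s ∂μ)) := by
  have ht1 : 0 < t + 1 := by linarith
  have hslice : ∀ s ∈ S, ContinuousOn (fun τ => f s τ) T := fun s hs =>
    hfcont.comp (f := fun τ => (s, τ)) (by fun_prop) fun τ hτ => ⟨hs, hτ⟩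
  set w : E' → ℝ := fun τ => Real.exp (ε * t / 2 * f z τ) with hw_def
  have hw : IntegrableOn w T ν :=
    IntegrableOn.exp_mul_of_abs_le_one hT hTfin (hslice z hz) (hfbd z hz) (by positivity)
  have hwf : ∀ s ∈ S, IntegrableOn (fun τ => w τ * f s τ) T ν := fun s hs => by
    refine hw.mul_bdd (c := 1) ((hslice s hs).aestronglyMeasurable_of_nullMeasurableSet hT) ?_
    filter_upwards [ae_restrict_mem₀ hT] with τ hτ using hfbd s hs τ hτ
  set W := ∫ τ in T, w τ ∂ν
  have hW : 0 ≤ W := integral_nonneg fun τ => (Real.exp_pos _).le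
  set G : E → ℝ := fun s => ∫ τ in T, w τ * f s τ ∂ν
  have hGbd : ∀ᵐ s ∂μ.restrict S, |G s| ≤ W := by
    filter_upwards [ae_restrict_mem₀ hS] with s hs
    rw [← Real.norm_eq_abs]
    refine norm_integral_le_of_norm_le hw ?_
    filter_upwards [ae_restrict_mem₀ hT] with τ hτ
    rw [norm_mul, Real.norm_of_nonneg (Real.exp_pos _).le]
    exact mul_le_of_le_one_right (Real.exp_pos _).le (hfbd s hs τ hτ)
  have hGm : AEStronglyMeasurable G (μ.restrict S) := by
    have hF : AEStronglyMeasurable (fun p : E × E' => w p.2 * f p.1 p.2)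
        ((μ.restrict S).prod (ν.restrict T)) := by
      refine (hw.aestronglyMeasurable.comp_snd).mul ?_
      rw [Measure.prod_restrict]
      exact hfcont.aestronglyMeasurable_of_nullMeasurableSet (hS.prod hT)
    exact hF.integral_prod_right'
  have hinner : ∀ s ∈ S, ∫ τ in T, Real.exp (ε * (t + 1) / 2 * f ((t + 1)⁻¹ • (t • z + s)) τ) ∂ν ≤
      W * (1 + ε ^ 2 / 6) + ε / 2 * G s := fun s hs => by
    have heq : W * (1 + ε ^ 2 / 6) + ε / 2 * G s =
        ∫ τ in T, (w τ * (1 + ε ^ 2 / 6) + ε / 2 * (w τ * f s τ)) ∂ν := by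
      rw [integral_add (hw.mul_const _) ((hwf s hs).const_mul _), integral_mul_const,
        integral_const_mul]
    rw [heq]
    refine integral_mono_of_nonneg (.of_forall fun τ => (Real.exp_pos _).le)
      ((hw.mul_const _).add ((hwf s hs).const_mul _)) ?_
    filter_upwards [ae_restrict_mem₀ hT] with τ hτ
    have hc : f ((t + 1)⁻¹ • (t • z + s)) τ ≤ t / (t + 1) * f z τ + 1 / (t + 1) * f s τ := by
      have := (hfconv τ hτ).2 hz hs (show 0 ≤ t / (t + 1) by positivity)
        (show 0 ≤ 1 / (t + 1) by positivity) (by field_simp)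
      simp only [smul_eq_mul] at this
      rwa [smul_add, smul_smul, ← div_eq_inv_mul, ← one_div]
    have hc' : ε * (t + 1) / 2 * f ((t + 1)⁻¹ • (t • z + s)) τ ≤
        ε * t / 2 * f z τ + ε / 2 * f s τ := by
      refine (mul_le_mul_of_nonneg_left hc (by positivity)).trans_eq ?_
      field_simp
    have habs := abs_le.1 (hfbd s hs τ hτ)
    have hexp : Real.exp (ε / 2 * f s τ) ≤ 1 + ε / 2 * f s τ + ε ^ 2 / 6 := by
      refine (exp_le_one_add_add_two_thirds_sq ?_).trans ?_
      · rw [abs_le]; constructor <;> nlinarith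
      · have : f s τ ^ 2 ≤ 1 := by nlinarith
        nlinarith [sq_nonneg ε]
    calc Real.exp (ε * (t + 1) / 2 * f ((t + 1)⁻¹ • (t • z + s)) τ)
        ≤ w τ * Real.exp (ε / 2 * f s τ) := by
          rw [hw_def, ← Real.exp_add]; exact Real.exp_le_exp.2 hc'
      _ ≤ w τ * (1 + ε / 2 * f s τ + ε ^ 2 / 6) :=
          mul_le_mul_of_nonneg_left hexp (Real.exp_pos _).le
      _ = _ := by ring
  set R := ∫ s in S, r s ∂μ
  set R' := ∫ s in S, rhat s ∂μ
  have hrhatG : IntegrableOn (fun s => rhat s * G s) S μ := hrhat.mul_bdd (c := W) hGm hGbd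
  have hrG : IntegrableOn (fun s => r s * G s) S μ := hr.mul_bdd (c := W) hGm hGbd
  have houter : ∫ s in S, (∫ τ in T, Real.exp (ε * (t + 1) / 2 *
      f ((t + 1)⁻¹ • (t • z + s)) τ) ∂ν) * rhat s ∂μ ≤
      W * (1 + ε ^ 2 / 6) * R' + ε / 2 * ∫ s in S, rhat s * G s ∂μ := by
    have heq : W * (1 + ε ^ 2 / 6) * R' + ε / 2 * ∫ s in S, rhat s * G s ∂μ =
        ∫ s in S, (W * (1 + ε ^ 2 / 6) * rhat s + ε / 2 * (rhat s * G s)) ∂μ := by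
      rw [integral_add (hrhat.const_mul _) (hrhatG.const_mul _), integral_const_mul,
        integral_const_mul]
    rw [heq]
    refine integral_mono_of_nonneg (.of_forall fun s =>
      mul_nonneg (integral_nonneg fun τ => (Real.exp_pos _).le) (hrhat_nn s))
      ((hrhat.const_mul _).add (hrhatG.const_mul _)) ?_
    filter_upwards [ae_restrict_mem₀ hS] with s hs
    exact (mul_le_mul_of_nonneg_right (hinner s hs) (hrhat_nn s)).trans_eq (by ring)
  have htv' : ∫ s in S, (rhat s / R' - r s / R) * G s ∂μ ≤ 2 * (ε / 4) * W := by
    refine integral_mul_le_of_abs_setIntegral_le (h := fun s => rhat s / R' - r s / R) hS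
      ((hrhat.div_const _).sub (hr.div_const _)) ?_ hW (fun S' hS' hS'm => ?_) hGbd
    · rw [integral_sub (hrhat.div_const _) (hr.div_const _), integral_div, integral_div,
        div_self hrhat_pos.ne', div_self hr_pos.ne', sub_self]
    · rw [integral_sub ((hrhat.mono_set hS').div_const _) ((hr.mono_set hS').div_const _),
        integral_div, integral_div]
      exact htv S' hS' hS'm
  have hsplit : ∫ s in S, (rhat s / R' - r s / R) * G s ∂μ =
      (∫ s in S, rhat s * G s ∂μ) / R' - (∫ s in S, r s * G s ∂μ) / R := by
    rw [← integral_div, ← integral_div, ← integral_sub (hrhatG.div_const _) (hrG.div_const _)]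
    congr 1 with s
    ring
  rw [hsplit] at htv'
  calc _ ≤ (W * (1 + ε ^ 2 / 6) * R' + ε / 2 * ∫ s in S, rhat s * G s ∂μ) / R' :=
        div_le_div_of_nonneg_right houter hrhat_pos.le
    _ = W * (1 + ε ^ 2 / 6) + ε / 2 * ((∫ s in S, rhat s * G s ∂μ) / R') := by
        field_simp
    _ ≤ _ := by nlinarith

theorem potential_factors_mul_le {P Q V ε : ℝ} (hP : 0 < P) (hQ : 0 < Q) (hε0 : 0 ≤ ε)
    (hε1 : ε ≤ 1) :
    ((1 + 5 / 12 * ε ^ 2) * P + -(ε / 2 * (V / Q))) *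
      ((1 + 5 / 12 * ε ^ 2) * Q + ε / 2 * (V / P)) ≤ (1 + 43 / 36 * ε ^ 2) * P * Q := by
  have heq : ((1 + 5 / 12 * ε ^ 2) * P + -(ε / 2 * (V / Q))) *
      ((1 + 5 / 12 * ε ^ 2) * Q + ε / 2 * (V / P)) =
      (1 + 5 / 12 * ε ^ 2) ^ 2 * (P * Q) - ε ^ 2 / 4 * V ^ 2 / (P * Q) := by
    field_simp
    ring
  have hcoef : (1 + 5 / 12 * ε ^ 2) ^ 2 ≤ 1 + 43 / 36 * ε ^ 2 := by
    have : ε ^ 2 ≤ 1 := pow_le_one₀ hε0 hε1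
    nlinarith [sq_nonneg ε]
  have hsq : 0 ≤ ε ^ 2 / 4 * V ^ 2 / (P * Q) := by positivity
  have := mul_le_mul_of_nonneg_right hcoef (mul_pos hP hQ).le
  rw [heq]
  linarith

/-- The conditional form of Lemma 5 of the paper: when `ξ` and `η` are sampled
independently from approximate distributions within total variation distance `ε/4` of the
exponential-weight distributions, the expected potential `Φ(t+1) = P(ξ,η)·Q(ξ,η)` is at
most `(1 + (43/36)ε²) Φ(t)`, where `Φ(t) = ‖p‖₁‖q‖₁`. -/
theorem stmt_8 {m n : ℕ} (X : Set (Fin m → ℝ)) (Y : Set (Fin n → ℝ))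
    (hXne : X.Nonempty) (hYne : Y.Nonempty)
    (hXbd : Bornology.IsBounded X) (hYbd : Bornology.IsBounded Y)
    (hXconv : Convex ℝ X) (hYconv : Convex ℝ Y)
    (hX0 : 0 < volume X) (hXfin : volume X < ⊤)
    (hY0 : 0 < volume Y) (hYfin : volume Y < ⊤)
    (F : (Fin m → ℝ) → (Fin n → ℝ) → ℝ)
    (hFcont : ContinuousOn (fun p : (Fin m → ℝ) × (Fin n → ℝ) => F p.1 p.2) (X ×ˢ Y))
    (hFconv : ∀ η ∈ Y, ConvexOn ℝ X fun ξ => F ξ η)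
    (hFconc : ∀ ξ ∈ X, ConcaveOn ℝ Y fun η => F ξ η)
    (hFbd : ∀ ξ ∈ X, ∀ η ∈ Y, |F ξ η| ≤ 1)
    (ε t : ℝ) (hε0 : 0 < ε) (hε1 : ε ≤ 1) (ht : 0 ≤ t)
    (x : Fin m → ℝ) (hx : x ∈ X) (y : Fin n → ℝ) (hy : y ∈ Y)
    (phat : (Fin m → ℝ) → ℝ) (qhat : (Fin n → ℝ) → ℝ)
    (hphat_nn : ∀ ξ, 0 ≤ phat ξ) (hqhat_nn : ∀ η, 0 ≤ qhat η)
    (hphat_int : IntegrableOn phat X volume) (hqhat_int : IntegrableOn qhat Y volume)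
    (hphat_pos : 0 < ∫ ξ in X, phat ξ) (hqhat_pos : 0 < ∫ η in Y, qhat η)
    (hphat_tv : ∀ X' ⊆ X, MeasurableSet X' →
      |(∫ ξ in X', phat ξ) / (∫ ξ in X, phat ξ) -
        (∫ ξ in X', Real.exp (-(ε * t / 2) * F ξ y)) /
          (∫ ξ in X, Real.exp (-(ε * t / 2) * F ξ y))| ≤ ε / 4)
    (hqhat_tv : ∀ Y' ⊆ Y, MeasurableSet Y' →
      |(∫ η in Y', qhat η) / (∫ η in Y, qhat η) -
        (∫ η in Y', Real.exp (ε * t / 2 * F x η)) /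
          (∫ η in Y, Real.exp (ε * t / 2 * F x η))| ≤ ε / 4) :
    (∫ ξ in X, ∫ η in Y,
        (∫ ξ' in X, Real.exp (-(ε * (t + 1) / 2) * F ξ' ((t + 1)⁻¹ • (t • y + η)))) *
          (∫ η' in Y, Real.exp (ε * (t + 1) / 2 * F ((t + 1)⁻¹ • (t • x + ξ)) η')) *
          (phat ξ * qhat η)) / ((∫ ξ in X, phat ξ) * (∫ η in Y, qhat η))
      ≤ (1 + 43 / 36 * ε ^ 2) * (∫ ξ in X, Real.exp (-(ε * t / 2) * F ξ y)) *
        (∫ η in Y, Real.exp (ε * t / 2 * F x η)) := by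
  have hXm : NullMeasurableSet X volume := hXconv.nullMeasurableSet volume
  have hYm : NullMeasurableSet Y volume := hYconv.nullMeasurableSet volume
  have hc : 0 ≤ ε * t / 2 := by positivity
  have hpF : ContinuousOn (fun ξ => -F ξ y) X :=
    (hFcont.comp (f := fun ξ => (ξ, y)) (by fun_prop) fun ξ hξ => ⟨hξ, hy⟩).neg
  have hqF : ContinuousOn (fun η => F x η) Y :=
    hFcont.comp (f := fun η => (x, η)) (by fun_prop) fun η hη => ⟨hx, hη⟩
  have hp : IntegrableOn (fun ξ => Real.exp (-(ε * t / 2 * F ξ y))) X volume := by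
    simpa only [mul_neg] using IntegrableOn.exp_mul_of_abs_le_one hXm hXfin hpF
      (fun ξ hξ => by rw [abs_neg]; exact hFbd ξ hξ y hy) hc
  have hq : IntegrableOn (fun η => Real.exp (ε * t / 2 * F x η)) Y volume :=
    IntegrableOn.exp_mul_of_abs_le_one hYm hYfin hqF (hFbd x hx) hc
  have hXz : NeZero (volume.restrict X) := ⟨by simpa using hX0.ne'⟩
  have hYz : NeZero (volume.restrict Y) := ⟨by simpa using hY0.ne'⟩
  have hp_pos := integral_exp_pos hp
  have hq_pos := integral_exp_pos hq
  simp only [neg_mul] at hphat_tv ⊢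
  have hA := expected_potential_factor_le (f := fun η ξ => -F ξ η) hYm hXm hXfin
    (hFcont.comp (f := fun p : (Fin n → ℝ) × (Fin m → ℝ) => (p.2, p.1)) (by fun_prop)
      fun p hp => ⟨hp.2, hp.1⟩).neg
    (fun ξ hξ => (hFconc ξ hξ).neg)
    (fun η hη ξ hξ => by rw [abs_neg]; exact hFbd ξ hξ η hη)
    hε0 hε1 ht hy hqhat_nn hqhat_int hq hqhat_pos hq_pos hqhat_tv
  have hB := expected_potential_factor_le hXm hYm hYfin hFcont hFconv hFbd
    hε0 hε1 ht hx hphat_nn hphat_int hp hphat_pos hp_pos hphat_tv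
  simp only [mul_neg, integral_neg, neg_div] at hA
  have hswap : ∫ η in Y, Real.exp (ε * t / 2 * F x η) *
        ∫ ξ in X, Real.exp (-(ε * t / 2 * F ξ y)) * F ξ η =
      ∫ ξ in X, Real.exp (-(ε * t / 2 * F ξ y)) *
        ∫ η in Y, Real.exp (ε * t / 2 * F x η) * F ξ η := by
    simp only [← integral_const_mul]
    rw [← integral_integral_swap]
    · simp only [mul_left_comm]
    · have hint : Integrable (fun z : (Fin m → ℝ) × (Fin n → ℝ) =>
          Real.exp (-(ε * t / 2 * F z.1 y)) * Real.exp (ε * t / 2 * F x z.2) * F z.1 z.2)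
          ((volume.restrict X).prod (volume.restrict Y)) := by
        refine (hp.mul_prod hq).mul_bdd (c := 1) ?_ ?_ <;> rw [Measure.prod_restrict]
        · exact hFcont.aestronglyMeasurable_of_nullMeasurableSet (hXm.prod hYm)
        · filter_upwards [ae_restrict_mem₀ (hXm.prod hYm)] with z hz
          exact hFbd _ hz.1 _ hz.2
      refine hint.congr (.of_forall fun z => ?_)
      simp only [Function.uncurry]
      ring
  rw [hswap] at hA
  have hfactor : ∀ (P : (Fin n → ℝ) → ℝ) (Q : (Fin m → ℝ) → ℝ),
      ∫ ξ in X, ∫ η in Y, P η * Q ξ * (phat ξ * qhat η) =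
        (∫ η in Y, P η * qhat η) * ∫ ξ in X, Q ξ * phat ξ := fun P Q => by
    rw [← integral_const_mul]
    refine integral_congr_ae (.of_forall fun ξ => ?_)
    simp only
    rw [← integral_mul_const]
    refine integral_congr_ae (.of_forall fun η => ?_)
    simp only
    ring
  rw [hfactor, mul_comm (∫ ξ in X, phat ξ), mul_div_mul_comm]
  have hB_nn := div_nonneg (integral_nonneg fun ξ => mul_nonneg
    (integral_nonneg (μ := volume.restrict Y) fun η' => (Real.exp_pos
      (ε * (t + 1) / 2 * F ((t + 1)⁻¹ • (t • x + ξ)) η')).le) (hphat_nn ξ)) hphat_pos.le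
    (a := ∫ ξ in X, _)
  have hA_nn := div_nonneg (integral_nonneg fun η => mul_nonneg
    (integral_nonneg (μ := volume.restrict X) fun ξ' => (Real.exp_pos
      (-(ε * (t + 1) / 2 * F ξ' ((t + 1)⁻¹ • (t • y + η))))).le) (hqhat_nn η)) hqhat_pos.le
    (a := ∫ η in Y, _)
  refine (mul_le_mul hA hB hB_nn (hA_nn.trans hA)).trans ?_
  exact potential_factors_mul_le hp_pos hq_pos hε0.le hε1
end

section
/- Let X ⊆ ℝ^m and Y ⊆ ℝ^n be measurable sets, and let F : X × Y → ℝ be a jointly measurable function with |F(ξ,η)| ≤ 1 for all (ξ,η). Let p, p̂ : X → ℝ≥0 and q, q̂ : Y → ℝ≥0 be integrable functions whose integrals ‖p‖₁, ‖p̂‖₁, ‖q‖₁, ‖q̂‖₁ (over X and Y respectively, with Lebesgue measure) are all positive, and let ε ∈ (0,1]. Assume that for every measurable X' ⊆ X, |∫_{X'} p̂ / ‖p̂‖₁ − ∫_{X'} p / ‖p‖₁| ≤ ε/4, and for every measurable Y' ⊆ Y, |∫_{Y'} q̂ / ‖q̂‖₁ − ∫_{Y'} q / ‖q‖₁| ≤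 ε/4. Then |(1/(‖p̂‖₁ ‖q‖₁)) ∫_X ∫_Y p̂(ξ) q(η) F(ξ,η) dη dξ − (1/(‖q̂‖₁ ‖p‖₁)) ∫_X ∫_Y p(ξ) q̂(η) F(ξ,η) dη dξ| ≤ ε. -/
open MeasureTheory

section
variable {α β : Type*} [MeasurableSpace α] [MeasurableSpace β] {μ : Measure α} {ν : Measure β}

/-- If all integrals of `d` over measurable sets are at most `δ` in absolute value, then the
`L¹` norm of `d` is at most `2 * δ`. -/
theorem integral_abs_le_two_mul_of_abs_setIntegral_le {d : α → ℝ} {δ : ℝ}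
    (hd : Integrable d μ) (h : ∀ S, MeasurableSet S → |∫ x in S, d x ∂μ| ≤ δ) :
    ∫ x, |d x| ∂μ ≤ 2 * δ := by
  have hmk := hd.1.ae_eq_mk
  set g := hd.1.mk d
  have hS : MeasurableSet {x | 0 ≤ g x} :=
    measurableSet_le measurable_const hd.1.stronglyMeasurable_mk.measurable
  have hpos : ∫ x in {x | 0 ≤ g x}, |d x| ∂μ = ∫ x in {x | 0 ≤ g x}, d x ∂μ := by
    refine setIntegral_congr_ae hS ?_
    filter_upwards [hmk] with x hx hxS
    exact abs_of_nonneg (hx ▸ hxS)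
  have hneg : ∫ x in {x | 0 ≤ g x}ᶜ, |d x| ∂μ = -∫ x in {x | 0 ≤ g x}ᶜ, d x ∂μ := by
    rw [← integral_neg]
    refine setIntegral_congr_ae hS.compl ?_
    filter_upwards [hmk] with x hx hxS
    exact abs_of_neg (hx ▸ not_le.mp hxS)
  rw [← integral_add_compl hS hd.abs, hpos, hneg]
  have h₁ := le_of_abs_le (h _ hS)
  have h₂ := neg_le_of_abs_le (h _ hS.compl)
  linarith

/-- Total variation form for unnormalized densities: if the probabilities of measurable subsets
of `X` differ by at most `δ`, the normalized densities are within `2 * δ` in `L¹`. -/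
theorem setIntegral_abs_sub_le_two_mul {X : Set α} (hX : MeasurableSet X) {f g : α → ℝ}
    {A B δ : ℝ} (hf : IntegrableOn f X μ) (hg : IntegrableOn g X μ)
    (h : ∀ S ⊆ X, MeasurableSet S →
      |(∫ x in S, f x ∂μ) / A - (∫ x in S, g x ∂μ) / B| ≤ δ) :
    ∫ x in X, |f x / A - g x / B| ∂μ ≤ 2 * δ := by
  refine integral_abs_le_two_mul_of_abs_setIntegral_le
    ((hf.div_const A).sub (hg.div_const B)) fun S hS => ?_
  rw [Measure.restrict_restrict hS]
  have hf' := hf.mono_set (Set.inter_subset_right (s := S))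
  have hg' := hg.mono_set (Set.inter_subset_right (s := S))
  rw [integral_sub (hf'.div_const A) (hg'.div_const B), integral_div, integral_div]
  exact h _ Set.inter_subset_right (hS.inter hX)

variable [SFinite μ] [SFinite ν]

theorem integrable_mul_mul_of_abs_le_one {F : α × β → ℝ} {f : α → ℝ} {g : β → ℝ}
    (hF : AEStronglyMeasurable F (μ.prod ν)) (hF1 : ∀ᵐ z ∂μ.prod ν, |F z| ≤ 1)
    (hf : Integrable f μ) (hg : Integrable g ν) :
    Integrable (fun z : α × β => f z.1 * g z.2 * F z) (μ.prod ν) :=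
  (hf.mul_prod hg).mul_bdd hF hF1

theorem abs_integral_mul_mul_le {F : α × β → ℝ} {f : α → ℝ} {g : β → ℝ}
    (hF1 : ∀ᵐ z ∂μ.prod ν, |F z| ≤ 1)
    (hf : Integrable f μ) (hg : Integrable g ν) :
    |∫ z, f z.1 * g z.2 * F z ∂μ.prod ν| ≤ (∫ x, |f x| ∂μ) * ∫ y, |g y| ∂ν := by
  rw [← integral_prod_mul]
  refine norm_integral_le_of_norm_le (f := fun z : α × β => f z.1 * g z.2 * F z)
    (hf.abs.mul_prod hg.abs) ?_
  filter_upwards [hF1] with z hz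
  rw [Real.norm_eq_abs, abs_mul, abs_mul]
  exact mul_le_of_le_one_right (by positivity) hz

/-- Stability of the integral of a bounded payoff against product densities. -/
theorem abs_integral_mul_mul_sub_le {F : α × β → ℝ} {f f' : α → ℝ} {g g' : β → ℝ}
    (hF : AEStronglyMeasurable F (μ.prod ν)) (hF1 : ∀ᵐ z ∂μ.prod ν, |F z| ≤ 1)
    (hf : Integrable f μ) (hf' : Integrable f' μ) (hg : Integrable g ν) (hg' : Integrable g' ν) :
    |(∫ z, f z.1 * g z.2 * F z ∂μ.prod ν) - ∫ z, f' z.1 * g' z.2 * F z ∂μ.prod ν| ≤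
      (∫ x, |f x - f' x| ∂μ) * (∫ y, |g y| ∂ν) + (∫ x, |f' x| ∂μ) * ∫ y, |g' y - g y| ∂ν := by
  have hsplit : (∫ z, f z.1 * g z.2 * F z ∂μ.prod ν) - ∫ z, f' z.1 * g' z.2 * F z ∂μ.prod ν =
      (∫ z, (f - f') z.1 * g z.2 * F z ∂μ.prod ν) -
        ∫ z, f' z.1 * (g' - g) z.2 * F z ∂μ.prod ν := by
    rw [← integral_sub (integrable_mul_mul_of_abs_le_one hF hF1 hf hg)
        (integrable_mul_mul_of_abs_le_one hF hF1 hf' hg'),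
      ← integral_sub (integrable_mul_mul_of_abs_le_one hF hF1 (hf.sub hf') hg)
        (integrable_mul_mul_of_abs_le_one hF hF1 hf' (hg'.sub hg))]
    congr 1 with z
    simp only [Pi.sub_apply]
    ring
  rw [hsplit]
  exact (abs_sub _ _).trans (add_le_add (abs_integral_mul_mul_le hF1 (hf.sub hf') hg)
    (abs_integral_mul_mul_le hF1 hf' (hg'.sub hg)))

theorem integral_integral_div_mul {F : α × β → ℝ} {f : α → ℝ} {g : β → ℝ}
    (hF : AEStronglyMeasurable F (μ.prod ν)) (hF1 : ∀ᵐ z ∂μ.prod ν, |F z| ≤ 1)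
    (hf : Integrable f μ) (hg : Integrable g ν) (A B : ℝ) :
    (∫ x, ∫ y, f x * g y * F (x, y) ∂ν ∂μ) / (A * B) =
      ∫ z, f z.1 / A * (g z.2 / B) * F z ∂μ.prod ν := by
  rw [integral_integral (integrable_mul_mul_of_abs_le_one hF hF1 hf hg), ← integral_div]
  congr 1 with z
  rw [div_mul_div_comm, div_mul_eq_mul_div]

end

theorem setIntegral_abs_div_self {α : Type*} [MeasurableSpace α] {μ : Measure α} {X : Set α}
    (hX : MeasurableSet X) {f : α → ℝ} (hf : ∀ x ∈ X, 0 ≤ f x) (hpos : 0 < ∫ x in X, f x ∂μ) :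
    ∫ x in X, |f x / ∫ y in X, f y ∂μ| ∂μ = 1 := by
  rw [setIntegral_congr_fun (g := fun x => f x / ∫ y in X, f y ∂μ) hX
    fun x hx => abs_of_nonneg (div_nonneg (hf x hx) hpos.le), integral_div, div_self hpos.ne']

/-- Proposition 1 of the paper: when the approximate sampling distributions are within
total variation distance `ε/4` of the exact ones, the two mixed expectations of the
bounded payoff `F` differ by at most `ε`. -/
theorem stmt_9 {m n : ℕ} (X : Set (Fin m → ℝ)) (Y : Set (Fin n → ℝ))
    (hX : MeasurableSet X) (hY : MeasurableSet Y)
    (F : (Fin m → ℝ) → (Fin n → ℝ) → ℝ)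
    (hFmeas : Measurable (fun z : (Fin m → ℝ) × (Fin n → ℝ) => F z.1 z.2))
    (hFbd : ∀ ξ ∈ X, ∀ η ∈ Y, |F ξ η| ≤ 1)
    (p phat : (Fin m → ℝ) → ℝ) (q qhat : (Fin n → ℝ) → ℝ)
    (hp_nn : ∀ ξ ∈ X, 0 ≤ p ξ) (hphat_nn : ∀ ξ ∈ X, 0 ≤ phat ξ)
    (hq_nn : ∀ η ∈ Y, 0 ≤ q η) (hqhat_nn : ∀ η ∈ Y, 0 ≤ qhat η)
    (hp_int : IntegrableOn p X volume) (hphat_int : IntegrableOn phat X volume)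
    (hq_int : IntegrableOn q Y volume) (hqhat_int : IntegrableOn qhat Y volume)
    (hp_pos : 0 < ∫ ξ in X, p ξ) (hphat_pos : 0 < ∫ ξ in X, phat ξ)
    (hq_pos : 0 < ∫ η in Y, q η) (hqhat_pos : 0 < ∫ η in Y, qhat η)
    (ε : ℝ) (hε0 : 0 < ε) (hε1 : ε ≤ 1)
    (hp_tv : ∀ X' ⊆ X, MeasurableSet X' →
      |(∫ ξ in X', phat ξ) / (∫ ξ in X, phat ξ) -
        (∫ ξ in X', p ξ) / (∫ ξ in X, p ξ)| ≤ ε / 4)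
    (hq_tv : ∀ Y' ⊆ Y, MeasurableSet Y' →
      |(∫ η in Y', qhat η) / (∫ η in Y, qhat η) -
        (∫ η in Y', q η) / (∫ η in Y, q η)| ≤ ε / 4) :
    |(∫ ξ in X, ∫ η in Y, phat ξ * q η * F ξ η) /
        ((∫ ξ in X, phat ξ) * (∫ η in Y, q η)) -
      (∫ ξ in X, ∫ η in Y, p ξ * qhat η * F ξ η) /
        ((∫ η in Y, qhat η) * (∫ ξ in X, p ξ))| ≤ ε := by
  have hF := hFmeas.aestronglyMeasurable (μ := (volume.restrict X).prod (volume.restrict Y))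
  have hF1 : ∀ᵐ z ∂(volume.restrict X).prod (volume.restrict Y), |F z.1 z.2| ≤ 1 := by
    rw [Measure.prod_restrict]
    exact ae_restrict_of_forall_mem (hX.prod hY) fun z hz => hFbd _ hz.1 _ hz.2
  rw [mul_comm (∫ η in Y, qhat η),
    integral_integral_div_mul hF hF1 hphat_int hq_int,
    integral_integral_div_mul hF hF1 hp_int hqhat_int]
  refine (abs_integral_mul_mul_sub_le hF hF1 (hphat_int.div_const _) (hp_int.div_const _)
    (hq_int.div_const _) (hqhat_int.div_const _)).trans ?_
  rw [setIntegral_abs_div_self hY hq_nn hq_pos, setIntegral_abs_div_self hX hp_nn hp_pos]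
  have h₁ := setIntegral_abs_sub_le_two_mul hX hphat_int hp_int hp_tv
  have h₂ := setIntegral_abs_sub_le_two_mul hY hqhat_int hq_int hq_tv
  linarith
end
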